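/- Let D ⊆ ℂ be a nonempty open connected set, (c_k) a sequence in D with no accumulation point in D, and (m_k) a sequence of natural numbers. Then there exists a holomorphic function g : D → ℂ whose zero set is exactly {c_k : k ∈ ℕ} and such that the order of vanishing of g at c_k equals m_k for each k. -/

import Mathlib

open Filter

/-- The compact exhaustion. -/
def wExh (D : Set ℂ) (n : ℕ) : Set ℂ :=
  {z | ‖z‖ ≤ (n : ℝ) ∧ ∀ w, w ∉ D → 1 / ((n : ℝ) + 1) ≤ dist z w}

lemma wExh_subset (D : Set ℂ) (n : ℕ) : wExh D n ⊆ D := by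
  intro z hz
  by_contra h
  have h1 := hz.2 z h
  rw [dist_self] at h1
  have : (0 : ℝ) < 1 / ((n : ℝ) + 1) := by positivity
  linarith

lemma wExh_mono (D : Set ℂ) {n k : ℕ} (h : n ≤ k) : wExh D n ⊆ wExh D k := by
  intro z hz
  have h' : (n : ℝ) ≤ k := by exact_mod_cast h
  refine ⟨hz.1.trans h', fun w hw => le_trans ?_ (hz.2 w hw)⟩
  gcongr

lemma wExh_compact (D : Set ℂ) (n : ℕ) : IsCompact (wExh D n) := by
  have hcl : IsClosed (wExh D n) := by
    have : wExh D n = {z | ‖z‖ ≤ (n : ℝ)} ∩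
        ⋂ w, ⋂ (_ : w ∉ D), {z | 1 / ((n : ℝ) + 1) ≤ dist z w} := by
      ext z; simp [wExh]
    rw [this]
    refine (isClosed_le (by fun_prop) (by fun_prop)).inter ?_
    exact isClosed_iInter fun w => isClosed_iInter fun _ =>
      isClosed_le (by fun_prop) (by fun_prop)
  refine (isCompact_closedBall (0 : ℂ) n).of_isClosed_subset hcl ?_
  intro z hz
  simpa using hz.1

lemma wExh_exhaust {D : Set ℂ} (hD : IsOpen D) {K : Set ℂ} (hK : IsCompact K) (hKD : K ⊆ D) :
    ∃ n, K ⊆ wExh D n := by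
  obtain ⟨δ, hδ, hsub⟩ := hK.exists_thickening_subset_open hD hKD
  obtain ⟨R, hR⟩ := hK.isBounded.exists_norm_le
  obtain ⟨n1, hn1⟩ := exists_nat_ge R
  obtain ⟨n2, hn2⟩ := exists_nat_one_div_lt hδ
  refine ⟨max n1 n2, fun z hz => ⟨?_, fun w hw => ?_⟩⟩
  · exact (hR z hz).trans (hn1.trans (by exact_mod_cast le_max_left _ _))
  · have h1 : δ ≤ dist z w := by
      by_contra hlt
      push Not at hlt
      exact hw (hsub (Metric.mem_thickening_iff.2 ⟨z, hz, by rwa [dist_comm]⟩))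
    have h2 : 1 / (((max n1 n2 : ℕ) : ℝ) + 1) ≤ 1 / ((n2 : ℝ) + 1) := by
      have : (n2 : ℝ) ≤ ((max n1 n2 : ℕ) : ℝ) := by exact_mod_cast le_max_right _ _
      gcongr
    linarith

lemma wUnit (D : Set ℂ) (c : ℂ) (n : ℕ) (hc : c ∉ wExh D (2 * n + 1)) :
    ∃ u w : ℂ → ℂ, DifferentiableOn ℂ u D ∧ DifferentiableOn ℂ w D ∧ (∀ z ∈ D, w z ≠ 0 ∨ z = c ∧ c ∉ D) ∧
      (∀ z ∈ D, 1 - u z = (z - c) * w z) ∧ ∀ z ∈ wExh D n, ‖u z‖ ≤ 1 / 2 := by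
  by_cases h1 : ‖c‖ ≤ ((2 * n + 1 : ℕ) : ℝ)
  · have : ∃ a, a ∉ D ∧ dist c a < 1 / (((2 * n + 1 : ℕ) : ℝ) + 1) := by
      by_contra hne
      push Not at hne
      exact hc ⟨h1, hne⟩
    obtain ⟨a, ha, hca⟩ := this
    have hza : ∀ z ∈ D, z - a ≠ 0 := fun z hz h => ha (by rwa [← sub_eq_zero.1 h])
    refine ⟨fun z => (c - a) / (z - a), fun z => 1 / (z - a), ?_, ?_, ?_, ?_, ?_⟩
    · exact DifferentiableOn.div (by fun_prop) (by fun_prop) hza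
    · exact DifferentiableOn.div (by fun_prop) (by fun_prop) hza
    · intro z hz
      exact Or.inl (one_div_ne_zero (hza z hz))
    · intro z hz
      have := hza z hz
      field_simp
      ring
    · intro z hz
      have h2 := hz.2 a ha
      rw [norm_div, ← dist_eq_norm, ← dist_eq_norm]
      have h3 : (0 : ℝ) < 1 / ((n : ℝ) + 1) := by positivity
      rw [div_le_iff₀ (by linarith)]
      have h4 : 1 / (((2 * n + 1 : ℕ) : ℝ) + 1) = 1 / 2 * (1 / ((n : ℝ) + 1)) := by
        push_cast
        field_simp
        ring
      rw [h4] at hca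
      linarith
  · push Not at h1
    have hc0 : 0 < ‖c‖ := lt_of_le_of_lt (by positivity) h1
    have hc0' : c ≠ 0 := norm_pos_iff.1 hc0
    refine ⟨fun z => z / c, fun z => -1 / c, by fun_prop, by fun_prop, ?_, ?_, ?_⟩
    · intro z _
      exact Or.inl (div_ne_zero (by norm_num) hc0')
    · intro z _
      field_simp
      ring
    · intro z hz
      rw [norm_div, div_le_iff₀ hc0]
      have := hz.1
      push_cast at h1
      linarith

lemma wElem (m : ℕ) {ε : ℝ} (hε : 0 < ε) :
    ∃ q : ℂ → ℂ, Differentiable ℂ q ∧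
      ∀ u : ℂ, ‖u‖ ≤ 1 / 2 → ‖((1 - u) * Complex.exp (q u)) ^ m - 1‖ ≤ ε := by
  have hlim : Tendsto (fun n : ℕ => (m : ℝ) * (1 / 2 : ℝ) ^ n) atTop (nhds 0) := by
    simpa using (tendsto_pow_atTop_nhds_zero_of_lt_one (by norm_num : (0 : ℝ) ≤ 1 / 2)
      (by norm_num)).const_mul (m : ℝ)
  have hpos : 0 < min 1 (ε / 2) := by positivity
  obtain ⟨n, hn⟩ := (hlim.eventually (gt_mem_nhds hpos)).exists
  refine ⟨fun u => -Complex.logTaylor (n + 1) (-u), ?_, ?_⟩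
  · intro u
    have h := (Complex.hasDerivAt_logTaylor n (-u)).differentiableAt
    exact (DifferentiableAt.comp u h (by fun_prop)).neg
  · intro u hu
    have hlt : ‖-u‖ < 1 := by rw [norm_neg]; linarith
    have hb := Complex.norm_log_sub_logTaylor_le n hlt
    set L := Complex.log (1 + -u) - Complex.logTaylor (n + 1) (-u) with hL
    have hne : 1 + -u ≠ 0 := Complex.slitPlane_ne_zero (Complex.mem_slitPlane_of_norm_lt_one hlt)
    have he : (1 - u) * Complex.exp (-Complex.logTaylor (n + 1) (-u)) = Complex.exp L := by
      rw [hL, Complex.exp_sub, Complex.exp_log hne, Complex.exp_neg, div_eq_mul_inv,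
        sub_eq_add_neg]
    have hLb : ‖L‖ ≤ (1 / 2 : ℝ) ^ n := by
      refine hb.trans ?_
      rw [norm_neg]
      have h1 : (1 - ‖u‖)⁻¹ ≤ 2 := by
        rw [inv_le_comm₀ (by linarith) (by norm_num)]
        linarith
      have h0 : 0 ≤ (1 - ‖u‖)⁻¹ := inv_nonneg.2 (by linarith)
      have h2 : ‖u‖ ^ (n + 1) ≤ (1 / 2) ^ (n + 1) := by gcongr
      calc ‖u‖ ^ (n + 1) * (1 - ‖u‖)⁻¹ / (n + 1) ≤ ‖u‖ ^ (n + 1) * (1 - ‖u‖)⁻¹ :=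
            div_le_self (by positivity) (by linarith [(Nat.cast_nonneg n : (0 : ℝ) ≤ n)])
        _ ≤ (1 / 2) ^ (n + 1) * 2 := by gcongr
        _ = (1 / 2) ^ n := by ring
    rw [he, ← Complex.exp_nat_mul]
    have hmL : ‖(m : ℂ) * L‖ ≤ min 1 (ε / 2) := by
      rw [norm_mul, Complex.norm_natCast]
      refine le_trans ?_ hn.le
      gcongr
    have := Complex.norm_exp_sub_one_le (hmL.trans (min_le_left _ _))
    have := hmL.trans (min_le_right _ _)
    linarith

lemma wFactor (D : Set ℂ) (c : ℂ) (hcD : c ∈ D) (n m : ℕ) (hc : c ∉ wExh D (2 * n + 1))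
    {ε : ℝ} (hε : 0 < ε) :
    ∃ v : ℂ → ℂ, DifferentiableOn ℂ v D ∧ (∀ z ∈ D, v z ≠ 0) ∧
      ∀ z ∈ wExh D n, ‖(z - c) ^ m * v z - 1‖ ≤ ε := by
  obtain ⟨u, w, hu, hw, hw0, huw, hub⟩ := wUnit D c n hc
  obtain ⟨q, hq, hqb⟩ := wElem m hε
  refine ⟨fun z => (w z * Complex.exp (q (u z))) ^ m, ?_, ?_, ?_⟩
  · have : DifferentiableOn ℂ (fun z => q (u z)) D := hq.comp_differentiableOn hu
    exact (hw.mul this.cexp).pow m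
  · intro z hz
    refine pow_ne_zero _ (mul_ne_zero ?_ (Complex.exp_ne_zero _))
    rcases hw0 z hz with h | h
    · exact h
    · exact absurd hcD h.2
  · intro z hz
    have := hqb (u z) (hub z hz)
    rw [huw z (wExh_subset D n hz), mul_assoc, mul_pow] at this
    exact this

lemma wFactor' (D : Set ℂ) (c : ℂ) (hcD : c ∈ D) (k m : ℕ) :
    ∃ v : ℂ → ℂ, DifferentiableOn ℂ v D ∧ (∀ z ∈ D, v z ≠ 0) ∧
      ∀ n ≤ k, c ∉ wExh D (2 * n + 1) →
        ∀ z ∈ wExh D n, ‖(z - c) ^ m * v z - 1‖ ≤ (1 / 2 : ℝ) ^ k := by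
  classical
  by_cases h0 : c ∈ wExh D (2 * 0 + 1)
  · refine ⟨fun _ => 1, by fun_prop, by simp, ?_⟩
    intro n _ hn
    exact absurd (wExh_mono D (by omega) h0) hn
  · have hs := Nat.findGreatest_spec (P := fun n => c ∉ wExh D (2 * n + 1)) (Nat.zero_le k) h0
    obtain ⟨v, h1, h2, h3⟩ := wFactor D c hcD _ m hs (ε := (1 / 2 : ℝ) ^ k) (by positivity)
    refine ⟨v, h1, h2, fun n hnk hn z hz => h3 z (wExh_mono D ?_ hz)⟩
    exact Nat.le_findGreatest hnk hn

lemma wProd {D : Set ℂ} (hD : IsOpen D) (F : ℕ → ℂ → ℂ) (hF : ∀ k, DifferentiableOn ℂ (F k) D)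
    (hb : ∀ n, ∀ᶠ k in atTop, ∀ z ∈ wExh D n, ‖F k z - 1‖ ≤ (1 / 2 : ℝ) ^ k) :
    DifferentiableOn ℂ (fun z => ∏' k, F k z) D ∧
      (∀ z ∈ D, Multipliable (fun k => F k z)) ∧
      ∀ z ∈ D, (∀ k, F k z ≠ 0) → ∏' k, F k z ≠ 0 := by
  have hgeo : Summable (fun k : ℕ => (1 / 2 : ℝ) ^ k) := summable_geometric_two
  have hF1 : ∀ k z, 1 + (F k z - 1) = F k z := fun k z => by ring
  have hP : HasProdLocallyUniformlyOn F (fun z => ∏' k, F k z) D := by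
    apply hasProdLocallyUniformlyOn_of_forall_compact hD
    intro K hKD hK
    obtain ⟨n, hn⟩ := wExh_exhaust hD hK hKD
    have := hgeo.hasProdUniformlyOn_nat_one_add (f := fun k z => F k z - 1) hK
      ((hb n).mono fun k h z hz => h z (hn hz))
      (fun k => (((hF k).mono hKD).continuousOn).sub continuousOn_const)
    simpa only [hF1] using this
  refine ⟨?_, fun z hz => (hP.hasProd hz).multipliable, ?_⟩
  · refine TendstoLocallyUniformlyOn.differentiableOn hP (.of_forall fun s => ?_) hD
    exact DifferentiableOn.fun_finsetProd (fun k _ => hF k)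
  · intro z hz hne
    have hs : Summable (fun k => ‖F k z - 1‖) := by
      obtain ⟨n, hn⟩ := wExh_exhaust hD (isCompact_singleton (x := z)) (by simpa using hz)
      refine hgeo.of_norm_bounded_eventually_nat ?_
      filter_upwards [hb n] with k hk
      simpa using hk z (hn rfl)
    have := tprod_one_add_ne_zero_of_summable (f := fun k => F k z - 1)
      (fun k => by simpa only [hF1] using hne k) hs
    simpa only [hF1] using this

/-- Weierstrass theorem: on a nonempty domain `D ⊆ ℂ`, given a sequence of distinct
points `c k ∈ D` with no accumulation point in `D` and prescribed multiplicities
`m k ≥ 1`, there is a holomorphic function on `D` whose zero set is exactly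
`{c k : k ∈ ℕ}` and which vanishes to order exactly `m k` at `c k`. -/
theorem weierstrass_prescribed_zeros (D : Set ℂ) (hD : IsOpen D)
    (hDconn : IsConnected D) (c : ℕ → ℂ) (hc : ∀ k, c k ∈ D)
    (hinj : Function.Injective c)
    (hacc : ∀ z ∈ D, ¬ MapClusterPt z Filter.atTop c)
    (m : ℕ → ℕ) (hm : ∀ k, 0 < m k) :
    ∃ g : ℂ → ℂ, DifferentiableOn ℂ g D ∧
      {z ∈ D | g z = 0} = Set.range c ∧
      ∀ k, (∀ j < m k, iteratedDeriv j g (c k) = 0) ∧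
        iteratedDeriv (m k) g (c k) ≠ 0 := by
  classical
  have hfin : ∀ n, ∀ᶠ k in atTop, c k ∉ wExh D n := by
    intro n
    by_contra h
    have h' : ∃ᶠ k in atTop, c k ∈ wExh D n := by simpa [Filter.Frequently] using h
    obtain ⟨z, hz, hcl⟩ := (wExh_compact D n).exists_mapClusterPt_of_frequently h'
    exact hacc z (wExh_subset D n hz) hcl
  choose v hv hv0 hvb using fun k => wFactor' D (c k) (hc k) k (m k)
  set F : ℕ → ℂ → ℂ := fun k z => (z - c k) ^ m k * v k z with hFdef
  have hFd : ∀ k, DifferentiableOn ℂ (F k) D := fun k =>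
    DifferentiableOn.mul (by fun_prop) (hv k)
  have hFb : ∀ n, ∀ᶠ k in atTop, ∀ z ∈ wExh D n, ‖F k z - 1‖ ≤ (1 / 2 : ℝ) ^ k := by
    intro n
    filter_upwards [hfin (2 * n + 1), eventually_ge_atTop n] with k h1 h2
    exact hvb k n h2 h1
  have hF0 : ∀ k, ∀ z ∈ D, z ≠ c k → F k z ≠ 0 := fun k z hz hne =>
    mul_ne_zero (pow_ne_zero _ (sub_ne_zero.2 hne)) (hv0 k z hz)
  obtain ⟨hgd, hgm, hgn⟩ := wProd hD F hFd hFb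
  have hfac : ∀ k, ∃ h : ℂ → ℂ, DifferentiableOn ℂ h D ∧ h (c k) ≠ 0 ∧
      ∀ z ∈ D, ∏' j, F j z = (z - c k) ^ m k * h z := by
    intro k
    obtain ⟨h1, h2, h3⟩ := wProd hD (fun j z => if j = k then 1 else F j z)
      (by
        intro j
        by_cases hj : j = k
        · simp [hj]
        · simpa [hj] using hFd j)
      (by
        intro n
        filter_upwards [hFb n] with j hj z hz
        by_cases hjk : j = k
        · simp [hjk]
        · simpa [hjk] using hj z hz)
    refine ⟨fun z => v k z * ∏' j, (if j = k then 1 else F j z), (hv k).mul h1, ?_, ?_⟩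
    · refine mul_ne_zero (hv0 k _ (hc k)) (h3 _ (hc k) ?_)
      intro j
      by_cases hjk : j = k
      · simp [hjk]
      · simpa [hjk] using hF0 j (c k) (hc k) (fun h => hjk (hinj h).symm)
    · intro z hz
      have hu : Multipliable (Function.update (fun j => F j z) k 1) := by
        refine (h2 z hz).congr fun j => ?_
        simp [Function.update_apply]
      rw [Multipliable.tprod_eq_mul_tprod_ite' k hu, ← mul_assoc]
  refine ⟨fun z => ∏' k, F k z, hgd, ?_, ?_⟩
  · ext z
    constructor
    · rintro ⟨hz, h0⟩
      by_contra hr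
      exact hgn z hz (fun k => hF0 k z hz fun h => hr ⟨k, h.symm⟩) h0
    · rintro ⟨k, rfl⟩
      refine ⟨hc k, ?_⟩
      obtain ⟨h, -, -, hh⟩ := hfac k
      show ∏' j, F j (c k) = 0
      rw [hh _ (hc k), sub_self, zero_pow (hm k).ne', zero_mul]
  · intro k
    obtain ⟨h, hd, hne, hh⟩ := hfac k
    have hnhds := hD.mem_nhds (hc k)
    have hga : AnalyticAt ℂ (fun z => ∏' k, F k z) (c k) := hgd.analyticAt hnhds
    have hord : analyticOrderAt (fun z => ∏' k, F k z) (c k) = (m k : ℕ∞) :=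
      hga.analyticOrderAt_eq_natCast.2 ⟨h, hd.analyticAt hnhds, hne, by
        filter_upwards [hnhds] with z hz
        simpa using hh z hz⟩
    have hle := (natCast_le_analyticOrderAt_iff_iteratedDeriv_eq_zero hga (n := m k)).1 hord.ge
    refine ⟨hle, fun h0 => ?_⟩
    have : ((m k + 1 : ℕ) : ℕ∞) ≤ analyticOrderAt (fun z => ∏' k, F k z) (c k) := by
      refine (natCast_le_analyticOrderAt_iff_iteratedDeriv_eq_zero hga).2 fun i hi => ?_
      rcases Nat.lt_succ_iff_lt_or_eq.1 hi with h | h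
      · exact hle i h
      · rw [h]; exact h0
    rw [hord] at this
    have : m k + 1 ≤ m k := by exact_mod_cast this
    omega
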